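/- Let f ∈ H_a^∞, let π/2 < θ < π and ε ≥ 0, and for λ ∉ Γ_{θ,ε} define f̃(λ) = (1/(2πi)) ∫_{Γ_{θ,ε}} f(z)/(z−λ) dz. Then f̃ is holomorphic on ℂ \ Γ_{θ,ε}, and f̃(λ) = f(λ) for every λ ∈ Γ_{θ,ε}^−, while f̃(λ) = 0 for every λ ∈ Γ_{θ,ε}^+. -/

import Mathlib

open Filter Topology MeasureTheory Set

noncomputable section

/-- Parametrization of the contour `Γ_{θ,ε}`: for `ε = 0` two rays
`t ↦ |t| e^{∓iθ}`, and for `ε > 0` the two rays `{ρ e^{±iθ} : ρ ≥ ε}` joined by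
the arc of the circle of radius `ε` through `-ε`, run from argument `-θ` to `θ`. -/
def gammaCurve (θ ε t : ℝ) : ℂ :=
  if t ≤ -ε then (-t : ℂ) * Complex.exp (-(θ : ℂ) * Complex.I)
  else if t < ε then
    (ε : ℂ) * Complex.exp (Complex.I * ((-(t * (Real.pi - θ) / ε) - Real.pi : ℝ) : ℂ))
  else (t : ℂ) * Complex.exp ((θ : ℂ) * Complex.I)

/-- The (piecewise) derivative of the parametrization `t ↦ gammaCurve θ ε t`. -/
def gammaDeriv (θ ε t : ℝ) : ℂ :=
  if t ≤ -ε then -Complex.exp (-(θ : ℂ) * Complex.I)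
  else if t < ε then
    -Complex.I * ((Real.pi - θ : ℝ) : ℂ) *
      Complex.exp (Complex.I * ((-(t * (Real.pi - θ) / ε) - Real.pi : ℝ) : ℂ))
  else Complex.exp ((θ : ℂ) * Complex.I)

/-- The open region to the right of the contour `Γ_{θ,ε}`. -/
def gammaPlus (θ ε : ℝ) : Set ℂ :=
  {w : ℂ | ∃ (t x : ℝ), 0 < x ∧ w = gammaCurve θ ε t + (x : ℂ)}

/-- The open region to the left of the contour `Γ_{θ,ε}`. -/
def gammaMinus (θ ε : ℝ) : Set ℂ :=
  {w : ℂ | ∃ (t x : ℝ), x < 0 ∧ w = gammaCurve θ ε t + (x : ℂ)}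

/-- The class `H_a^∞` of admissible holomorphic functions on the left half-plane. -/
structure MemHaInf (f : ℂ → ℂ) : Prop where
  holo : DifferentiableOn ℂ f {z : ℂ | z.re < 0}
  bdd : ∃ M : ℝ, ∀ z : ℂ, z.re < 0 → ‖f z‖ ≤ M
  lineIntPlus : ∀ x : ℝ, x ≤ 0 → ∀ θ : ℝ, Real.pi / 2 < θ → θ < Real.pi →
    IntegrableOn
      (fun r : ℝ => ‖f ((x : ℂ) + (r : ℂ) * Complex.exp ((θ : ℂ) * Complex.I))‖)
      (Set.Ioi 0)
  lineIntMinus : ∀ x : ℝ, x ≤ 0 → ∀ θ : ℝ, Real.pi / 2 < θ → θ < Real.pi →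
    IntegrableOn
      (fun r : ℝ => ‖f ((x : ℂ) + (r : ℂ) * Complex.exp (-(θ : ℂ) * Complex.I))‖)
      (Set.Ioi 0)

/- The difference of two Cauchy kernels decays quadratically, which makes up for the missing decay
of a bounded `f`: such integrands have a primitive to the left of the contour, obtained by
integrating along horizontal half-lines from `-∞`, so their integrals over left translates of the
contour vanish, and hence so does the integral over the contour itself. For poles `l` and `m` on the
right this gives `f̃(l) = f̃(m)`. For `l` on the left the difference quotient of `f` at `l` removes
the pole, and a logarithmic primitive evaluates the integral of the kernel difference as `2πi`, so
that `f̃(l) - f̃(m) = f(l)`. Since `f̃(m) → 0` as `m → +∞` along the real axis, `f̃(m) = 0`. -/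

section Decay

lemma norm_le_norm_add_ofReal {z : ℂ} {s : ℝ} (hz : z.re ≤ 0) (hs : s ≤ 0) : ‖z‖ ≤ ‖z + s‖ := by
  rw [Complex.norm_def, Complex.norm_def]
  apply Real.sqrt_le_sqrt
  simp only [Complex.normSq_apply, Complex.add_re, Complex.add_im, Complex.ofReal_re,
    Complex.ofReal_im, add_zero]
  nlinarith

lemma abs_le_norm_add_ofReal {z : ℂ} {s : ℝ} (hz : z.re ≤ 0) (hs : s ≤ 0) : |s| ≤ ‖z + s‖ :=
  calc |s| ≤ |(z + s).re| := by
        rw [Complex.add_re, Complex.ofReal_re, abs_of_nonpos hs, abs_of_nonpos (by linarith)]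
        linarith
    _ ≤ ‖z + s‖ := Complex.abs_re_le_norm _

lemma integrable_inv_one_add_abs_sq : Integrable fun t : ℝ ↦ ((1 + |t|) ^ 2)⁻¹ := by
  refine (integrable_one_add_norm (E := ℝ) (r := 2) (by norm_num)).congr (ae_of_all _ fun t ↦ ?_)
  simp only [Real.norm_eq_abs]
  rw [Real.rpow_neg (by positivity), Real.rpow_two]

lemma tendsto_inv_one_add_sq {ι : Type*} {F : Filter ι} {v : ι → ℝ} (hv : Tendsto v F atTop) :
    Tendsto (fun i ↦ ((1 + v i) ^ 2)⁻¹) F (𝓝 0) :=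
  tendsto_inv_atTop_zero.comp <| (tendsto_pow_atTop two_ne_zero).comp <|
    tendsto_atTop_add_const_left _ 1 hv

lemma exists_norm_inv_sub_le {𝕜 : Type*} [NormedField 𝕜] {S : Set 𝕜} {l : 𝕜}
    (hl : l ∉ closure S) :
    ∃ C, 0 ≤ C ∧ ∀ z ∈ S, ‖(z - l)⁻¹‖ ≤ C * (1 + ‖z‖)⁻¹ := by
  obtain ⟨d, hd, hdist⟩ : ∃ d > 0, ∀ z ∈ S, d ≤ ‖z - l‖ := by
    simpa only [Metric.mem_closure_iff, not_forall, not_exists, not_and, not_lt, dist_eq_norm_sub',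
      exists_prop] using hl
  refine ⟨(1 + ‖l‖) / d + 1, by positivity, fun z hz ↦ ?_⟩
  have hpos : 0 < ‖z - l‖ := hd.trans_le (hdist z hz)
  rw [norm_inv, ← div_eq_mul_inv, inv_le_comm₀ hpos (by positivity), inv_div,
    div_le_iff₀ (by positivity)]
  calc 1 + ‖z‖ ≤ (1 + ‖l‖) / d * d + ‖z - l‖ := by
        rw [div_mul_cancel₀ _ hd.ne']
        linarith [norm_le_norm_add_norm_sub' z l]
    _ ≤ (1 + ‖l‖) / d * ‖z - l‖ + ‖z - l‖ := by gcongr; exact hdist z hz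
    _ = ‖z - l‖ * ((1 + ‖l‖) / d + 1) := by ring

variable {E : Type*} [NormedAddCommGroup E] [NormedSpace ℂ E] {U : Set ℂ} {f : ℂ → E} {l : ℂ}

lemma exists_norm_dslope_le (hU : U ∈ 𝓝 l) (hf : DifferentiableOn ℂ f U)
    (hbdd : ∃ M, ∀ z ∈ U, ‖f z‖ ≤ M) : ∃ B, 0 ≤ B ∧ ∀ z ∈ U, ‖dslope f l z‖ ≤ B := by
  obtain ⟨M, hM⟩ := hbdd
  obtain ⟨r, hr, hball⟩ := Metric.mem_nhds_iff.1 hU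
  have hMl := hM l (mem_of_mem_nhds hU)
  have hM0 : 0 ≤ M := (norm_nonneg _).trans hMl
  have hdiff : ∀ z ∈ U, ‖f z - f l‖ ≤ 2 * M := fun z hz ↦
    (norm_sub_le _ _).trans (by linarith [hM z hz])
  refine ⟨2 * M / r, by positivity, fun z hz ↦ ?_⟩
  by_cases hzr : z ∈ Metric.ball l r
  · refine Complex.norm_dslope_le_div_of_mapsTo_ball (hf.mono hball) (fun w hw ↦ ?_) hzr
    simpa only [Metric.mem_closedBall, dist_eq_norm_sub] using hdiff w (hball hw)
  · have hzr' : r ≤ ‖z - l‖ := by simpa only [Metric.mem_ball, not_lt, dist_eq_norm_sub] using hzr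
    rw [le_div_iff₀ hr, mul_comm]
    calc r * ‖dslope f l z‖ ≤ ‖z - l‖ * ‖dslope f l z‖ := by gcongr
      _ = ‖f z - f l‖ := by rw [← norm_smul, sub_smul_dslope]
      _ ≤ 2 * M := hdiff z hz

lemma exists_norm_dslope_le_inv_one_add_norm (hU : U ∈ 𝓝 l) (hf : DifferentiableOn ℂ f U)
    (hbdd : ∃ M, ∀ z ∈ U, ‖f z‖ ≤ M) :
    ∃ C, 0 ≤ C ∧ ∀ z ∈ U, ‖dslope f l z‖ ≤ C * (1 + ‖z‖)⁻¹ := by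
  obtain ⟨B, hB0, hB⟩ := exists_norm_dslope_le hU hf hbdd
  obtain ⟨M, hM⟩ := hbdd
  have hMl := hM l (mem_of_mem_nhds hU)
  have hM0 : 0 ≤ M := (norm_nonneg _).trans hMl
  refine ⟨(1 + ‖l‖) * B + 2 * M, by positivity, fun z hz ↦ ?_⟩
  rw [← div_eq_mul_inv, le_div_iff₀ (by positivity), mul_comm]
  calc (1 + ‖z‖) * ‖dslope f l z‖ ≤ (1 + ‖l‖ + ‖z - l‖) * ‖dslope f l z‖ :=
        mul_le_mul_of_nonneg_right (by linarith [norm_le_norm_add_norm_sub' z l]) (norm_nonneg _)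
    _ = (1 + ‖l‖) * ‖dslope f l z‖ + ‖f z - f l‖ := by
        rw [add_mul, ← norm_smul (z - l), sub_smul_dslope]
    _ ≤ (1 + ‖l‖) * B + 2 * M := by
        gcongr
        · exact hB z hz
        · exact (norm_sub_le _ _).trans (by linarith [hM z hz])

end Decay

section Kernel

/-- The difference of the Cauchy kernels with poles `l` and `m`. Unlike a single Cauchy kernel it
decays quadratically at infinity, so it is integrable on unbounded contours. -/
def cauchyKernelSub (l m z : ℂ) : ℂ := (z - l)⁻¹ - (z - m)⁻¹

variable {l m z : ℂ}

lemma cauchyKernelSub_eq (hl : z ≠ l) (hm : z ≠ m) :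
    cauchyKernelSub l m z = (l - m) * ((z - l)⁻¹ * (z - m)⁻¹) := by
  have := sub_ne_zero.2 hl
  have := sub_ne_zero.2 hm
  rw [cauchyKernelSub]
  field_simp
  ring

lemma differentiableAt_cauchyKernelSub (hl : z ≠ l) (hm : z ≠ m) :
    DifferentiableAt ℂ (cauchyKernelSub l m) z := by
  have := sub_ne_zero.2 hl
  have := sub_ne_zero.2 hm
  unfold cauchyKernelSub
  fun_prop (disch := assumption)

lemma measurable_cauchyKernelSub : Measurable (cauchyKernelSub l m) := by
  unfold cauchyKernelSub
  fun_prop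

lemma exists_norm_cauchyKernelSub_le {S : Set ℂ} (hl : l ∉ closure S) (hm : m ∉ closure S) :
    ∃ C, 0 ≤ C ∧ ∀ z ∈ S, ‖cauchyKernelSub l m z‖ ≤ C * ((1 + ‖z‖) ^ 2)⁻¹ := by
  obtain ⟨A, hA0, hA⟩ := exists_norm_inv_sub_le hl
  obtain ⟨B, hB0, hB⟩ := exists_norm_inv_sub_le hm
  refine ⟨‖l - m‖ * (A * B), by positivity, fun z hz ↦ ?_⟩
  have hzl : z ≠ l := fun h ↦ hl (subset_closure (h ▸ hz))
  have hzm : z ≠ m := fun h ↦ hm (subset_closure (h ▸ hz))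
  rw [cauchyKernelSub_eq hzl hzm, norm_mul, norm_mul]
  calc ‖l - m‖ * (‖(z - l)⁻¹‖ * ‖(z - m)⁻¹‖)
      ≤ ‖l - m‖ * (A * (1 + ‖z‖)⁻¹ * (B * (1 + ‖z‖)⁻¹)) := by
        gcongr
        exacts [hA z hz, hB z hz]
    _ = ‖l - m‖ * (A * B) * ((1 + ‖z‖) ^ 2)⁻¹ := by rw [← inv_pow]; ring

lemma dslope_mul_eq_sub_mul_cauchyKernelSub (f : ℂ → ℂ) (hl : z ≠ l) (hm : z ≠ m) :
    dslope f l z * ((l - m) * (z - m)⁻¹) = (f z - f l) * cauchyKernelSub l m z := by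
  rw [dslope_of_ne f hl, slope_def_field, cauchyKernelSub_eq hl hm]
  ring

lemma tendsto_add_ofReal_nhdsLT_zero (z : ℂ) :
    Tendsto (fun s : ℝ ↦ z + s) (𝓝[<] 0) (𝓝 z) := by
  refine Tendsto.mono_left (Continuous.tendsto' (by fun_prop) _ _ ?_) nhdsWithin_le_nhds
  simp only [Complex.ofReal_zero, add_zero]

lemma tendsto_cauchyKernelSub_add_ofReal (hl : z ≠ l) (hm : z ≠ m) :
    Tendsto (fun s : ℝ ↦ cauchyKernelSub l m (z + s)) (𝓝[<] 0) (𝓝 (cauchyKernelSub l m z)) :=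
  (differentiableAt_cauchyKernelSub hl hm).continuousAt.tendsto.comp
    (tendsto_add_ofReal_nhdsLT_zero z)

lemma log_sub_log_neg_of_im_pos (hz : 0 < z.im) :
    Complex.log z - Complex.log (-z) = Real.pi * Complex.I := by
  rw [Complex.log, Complex.log, norm_neg, Complex.arg_neg_eq_arg_sub_pi_of_im_pos hz]
  push_cast
  ring

lemma log_sub_log_neg_of_im_neg (hz : z.im < 0) :
    Complex.log z - Complex.log (-z) = -Real.pi * Complex.I := by
  rw [Complex.log, Complex.log, norm_neg, Complex.arg_neg_eq_arg_add_pi_of_im_neg hz]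
  push_cast
  ring

lemma tendsto_log_sub_sub_log_sub {ι : Type*} {F : Filter ι} {u : ι → ℂ} {r : ι → ℝ} {w : ℂ}
    (hr : Tendsto r F atTop) (hu : Tendsto (fun i ↦ u i / r i) F (𝓝 w)) (hw : w.im ≠ 0)
    (l m : ℂ) :
    Tendsto (fun i ↦ Complex.log (u i - l) - Complex.log (m - u i)) F
      (𝓝 (Complex.log w - Complex.log (-w))) := by
  have hw₁ : w ∈ Complex.slitPlane := Or.inr hw
  have hw₂ : -w ∈ Complex.slitPlane := Or.inr (by simpa using hw)
  have hinv (c : ℂ) : Tendsto (fun i ↦ c / (r i : ℂ)) F (𝓝 0) := by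
    have h := (Complex.continuous_ofReal.tendsto 0).comp (tendsto_inv_atTop_zero.comp hr)
    simpa [div_eq_mul_inv, Function.comp_def] using h.const_mul c
  have hleft : Tendsto (fun i ↦ (u i - l) / r i) F (𝓝 w) := by
    simpa only [sub_div, sub_zero] using hu.sub (hinv l)
  have hright : Tendsto (fun i ↦ (m - u i) / r i) F (𝓝 (-w)) := by
    simpa only [sub_div, zero_sub] using (hinv m).sub hu
  refine ((hleft.clog hw₁).sub (hright.clog hw₂)).congr' ?_
  filter_upwards [hr.eventually_gt_atTop 0, hleft.eventually_ne (Complex.slitPlane_ne_zero hw₁),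
    hright.eventually_ne (Complex.slitPlane_ne_zero hw₂)] with i hi h₁ h₂
  have hrc : (r i : ℂ) ≠ 0 := Complex.ofReal_ne_zero.2 hi.ne'
  have hlog (c : ℂ) (hc : c / r i ≠ 0) :
      Complex.log c = Real.log (r i) + Complex.log (c / r i) := by
    rw [← Complex.log_ofReal_mul hi hc, mul_div_cancel₀ _ hrc]
  rw [hlog _ h₁, hlog _ h₂]
  ring

end Kernel

section LeftwardPrimitive

variable {E : Type*} [NormedAddCommGroup E] [NormedSpace ℂ E]

/-- The primitive of `H` obtained by integrating along the horizontal half-line from `-∞` to `z`;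
it makes sense for functions that are integrable on such half-lines. -/
def leftwardPrimitive (H : ℂ → E) (z : ℂ) : E := ∫ s in Iic (0 : ℝ), H (z + s)

variable {H : ℂ → E} {U : Set ℂ} {b : ℝ → ℝ} {z : ℂ}

lemma hasDerivAt_comp_add_ofReal {s : ℝ} (hH : DifferentiableAt ℂ H (z + s)) :
    HasDerivAt (fun s : ℝ ↦ H (z + s)) (deriv H (z + s)) s := by
  simpa only [Complex.ofRealCLM_apply, Complex.ofReal_one, one_smul, Function.comp_def] using
    hH.hasDerivAt.scomp s (Complex.ofRealCLM.hasDerivAt.const_add z)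

lemma norm_deriv_add_ofReal_le {s r : ℝ} (hr : 0 < r) (hball : Metric.closedBall z r ⊆ U)
    (hUs : ∀ z ∈ U, z + s ∈ U) (hH : DifferentiableOn ℂ H U) {B : ℝ}
    (hHB : ∀ z ∈ U, ‖H (z + s)‖ ≤ B) : ‖deriv H (z + s)‖ ≤ B / r := by
  have hHs : DifferentiableOn ℂ (fun w ↦ H (w + s)) U := hH.comp (by fun_prop) hUs
  rw [← deriv_comp_add_const]
  exact Complex.norm_deriv_le_of_forall_mem_sphere_norm_le hr (hHs.diffContOnCl_ball hball)
    fun w hw ↦ hHB w (hball (Metric.sphere_subset_closedBall hw))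

lemma setIntegral_deriv_add_ofReal [CompleteSpace E]
    (hH : ∀ s : ℝ, s ≤ 0 → DifferentiableAt ℂ H (z + s))
    (hint : IntegrableOn (fun s : ℝ ↦ H (z + s)) (Iic 0))
    (hint' : IntegrableOn (fun s : ℝ ↦ deriv H (z + s)) (Iic 0)) :
    ∫ s in Iic (0 : ℝ), deriv H (z + s) = H z := by
  have hderiv (s : ℝ) (hs : s ∈ Iic 0) := hasDerivAt_comp_add_ofReal (hH s hs)
  simpa using integral_Iic_of_hasDerivAt_of_tendsto' hderiv hint'
    (tendsto_zero_of_hasDerivAt_of_integrableOn_Iic hderiv hint' hint)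

lemma hasDerivAt_leftwardPrimitive [CompleteSpace E] (hU : IsOpen U)
    (hUs : ∀ z ∈ U, ∀ s : ℝ, s ≤ 0 → z + s ∈ U) (hH : DifferentiableOn ℂ H U)
    (hb : IntegrableOn b (Iic 0)) (hHb : ∀ z ∈ U, ∀ s : ℝ, s ≤ 0 → ‖H (z + s)‖ ≤ b s)
    (hz : z ∈ U) : HasDerivAt (leftwardPrimitive H) (H z) z := by
  obtain ⟨r, hr, hball⟩ := Metric.nhds_basis_closedBall.mem_iff.1 (hU.mem_nhds hz)
  have hmem {w : ℂ} (hw : w ∈ Metric.ball z (r / 2)) : Metric.closedBall w (r / 2) ⊆ U := by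
    refine (Metric.closedBall_subset_closedBall' ?_).trans hball
    linarith [Metric.mem_ball.1 hw]
  have hmeas {F : ℂ → E} (hF : ContinuousOn F U) {w : ℂ} (hw : w ∈ U) :
      AEStronglyMeasurable (fun s : ℝ ↦ F (w + s)) (volume.restrict (Iic 0)) :=
    (hF.comp (by fun_prop) fun s hs ↦ hUs w hw s hs).aestronglyMeasurable measurableSet_Iic
  have hcauchy : ∀ᵐ s : ℝ ∂volume.restrict (Iic 0), ∀ w ∈ Metric.ball z (r / 2),
      ‖deriv H (w + s)‖ ≤ b s / (r / 2) := by
    refine ae_restrict_of_forall_mem measurableSet_Iic fun s hs w hw ↦ ?_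
    exact norm_deriv_add_ofReal_le (half_pos hr) (hmem hw) (hUs · · s hs) hH (hHb · · s hs)
  have hdiff : ∀ᵐ s : ℝ ∂volume.restrict (Iic 0), ∀ w ∈ Metric.ball z (r / 2),
      HasDerivAt (fun w ↦ H (w + s)) (deriv H (w + s)) w := by
    refine ae_restrict_of_forall_mem measurableSet_Iic fun s hs w hw ↦ ?_
    have hw' := hUs w (hmem hw (Metric.mem_closedBall_self (half_pos hr).le)) s hs
    exact (hH.differentiableAt (hU.mem_nhds hw')).hasDerivAt.comp_add_const w s
  have hint : IntegrableOn (fun s : ℝ ↦ H (z + s)) (Iic 0) :=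
    hb.mono' (hmeas hH.continuousOn hz) (ae_restrict_of_forall_mem measurableSet_Iic (hHb z hz))
  have hmeas' := hmeas (hH.deriv hU).continuousOn hz
  obtain ⟨hint', hP⟩ := hasDerivAt_integral_of_dominated_loc_of_deriv_le
    (Metric.ball_mem_nhds z (half_pos hr)) (eventually_of_mem (hU.mem_nhds hz) fun w hw ↦
      hmeas hH.continuousOn hw) hint hmeas' hcauchy (hb.div_const _) hdiff
  rwa [setIntegral_deriv_add_ofReal
    (fun s hs ↦ hH.differentiableAt (hU.mem_nhds (hUs z hz s hs))) hint hint'] at hP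

lemma tendsto_leftwardPrimitive_zero {ι : Type*} {F : Filter ι} [F.IsCountablyGenerated]
    {u : ι → ℂ} {C : ℝ} (hU : ∀ z ∈ U, z.re ≤ 0) (hUs : ∀ z ∈ U, ∀ s : ℝ, s ≤ 0 → z + s ∈ U)
    (hH : ContinuousOn H U) (hC : 0 ≤ C) (hHC : ∀ z ∈ U, ‖H z‖ ≤ C * ((1 + ‖z‖) ^ 2)⁻¹)
    (hu : ∀ i, u i ∈ U) (hu_top : Tendsto (fun i ↦ ‖u i‖) F atTop) :
    Tendsto (fun i ↦ leftwardPrimitive H (u i)) F (𝓝 0) := by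
  suffices h : Tendsto (fun i ↦ leftwardPrimitive H (u i)) F
      (𝓝 (∫ _ in Iic (0 : ℝ), (0 : E))) by simpa only [integral_zero] using h
  refine tendsto_integral_filter_of_dominated_convergence (fun s ↦ C * ((1 + |s|) ^ 2)⁻¹)
    (.of_forall fun i ↦ ?_) (.of_forall fun i ↦ ?_)
    (integrable_inv_one_add_abs_sq.const_mul C).integrableOn ?_
  · exact (hH.comp (by fun_prop) fun s hs ↦ hUs (u i) (hu i) s hs).aestronglyMeasurable
      measurableSet_Iic
  · refine ae_restrict_of_forall_mem measurableSet_Iic fun s hs ↦ ?_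
    refine (hHC _ (hUs _ (hu i) s hs)).trans ?_
    gcongr
    exact abs_le_norm_add_ofReal (hU _ (hu i)) hs
  · refine ae_restrict_of_forall_mem measurableSet_Iic fun s hs ↦ ?_
    have hdecay : Tendsto (fun i ↦ C * ((1 + ‖u i‖) ^ 2)⁻¹) F (𝓝 0) := by
      simpa only [mul_zero] using (tendsto_inv_one_add_sq hu_top).const_mul C
    refine squeeze_zero_norm (fun i ↦ (hHC _ (hUs _ (hu i) s hs)).trans ?_) hdecay
    gcongr
    exact norm_le_norm_add_ofReal (hU _ (hu i)) hs

end LeftwardPrimitive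

lemma integral_eq_sub_of_hasDerivAt_off_countable {E : Type*} [NormedAddCommGroup E]
    [NormedSpace ℝ E] [CompleteSpace E] {F F' : ℝ → E} {S : Set ℝ} {a b : E}
    (hS : S.Countable) (hc : Continuous F) (hF : ∀ t ∉ S, HasDerivAt F (F' t) t)
    (hint : Integrable F') (hbot : Tendsto F atBot (𝓝 a)) (htop : Tendsto F atTop (𝓝 b)) :
    ∫ t, F' t = b - a := by
  refine tendsto_nhds_unique (intervalIntegral_tendsto_integral hint tendsto_neg_atTop_atBot
    tendsto_id) (((htop.sub (hbot.comp tendsto_neg_atTop_atBot))).congr fun T ↦ ?_)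
  exact (MeasureTheory.integral_eq_of_hasDerivAt_off_countable F F' hS hc.continuousOn
    (fun t ht ↦ hF t ht.2) hint.intervalIntegrable).symm

section CauchyIntegral

variable {α : Type*} {γ : α → ℂ} {w : ℂ}

lemma exists_pos_le_norm_sub (hw : w ∉ closure (range γ)) : ∃ r > 0, ∀ a, r ≤ ‖γ a - w‖ := by
  simpa only [Metric.mem_closure_range_iff, not_forall, not_exists, not_lt, dist_eq_norm_sub',
    exists_prop] using hw

variable [MeasurableSpace α] {μ : Measure α} {u : α → ℂ}

lemma integrable_div_sub (hu : Integrable u μ) (hγ : AEMeasurable γ μ)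
    (hw : w ∉ closure (range γ)) : Integrable (fun a ↦ u a / (γ a - w)) μ := by
  obtain ⟨r, hr, hrγ⟩ := exists_pos_le_norm_sub hw
  simp only [div_eq_mul_inv]
  refine hu.mul_bdd (c := r⁻¹) (hγ.sub_const w).inv.aestronglyMeasurable (ae_of_all _ fun a ↦ ?_)
  rw [norm_inv]
  exact inv_anti₀ hr (hrγ a)

lemma differentiableAt_integral_div_sub (hu : Integrable u μ) (hγ : AEMeasurable γ μ)
    (hw : w ∉ closure (range γ)) :
    DifferentiableAt ℂ (fun w ↦ ∫ a, u a / (γ a - w) ∂μ) w := by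
  obtain ⟨r, hr, hrγ⟩ := exists_pos_le_norm_sub hw
  have hlower (v : ℂ) (hv : v ∈ Metric.ball w (r / 2)) (a : α) : r / 2 ≤ ‖γ a - v‖ := by
    rw [mem_ball_iff_norm] at hv
    linarith [hrγ a, norm_sub_le_norm_sub_add_norm_sub (γ a) v w]
  refine (hasDerivAt_integral_of_dominated_loc_of_deriv_le
    (F' := fun v a ↦ u a / (γ a - v) ^ 2) (bound := fun a ↦ ‖u a‖ / (r / 2) ^ 2)
    (Metric.ball_mem_nhds w (half_pos hr)) (.of_forall fun v ↦ ?_)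
    (integrable_div_sub hu hγ hw) ?_ (ae_of_all _ fun a v hv ↦ ?_) (hu.norm.div_const _)
    (ae_of_all _ fun a v hv ↦ ?_)).2.differentiableAt
  · exact (hu.aemeasurable.div (hγ.sub_const v)).aestronglyMeasurable
  · exact (hu.aemeasurable.div ((hγ.sub_const w).pow_const 2)).aestronglyMeasurable
  · rw [norm_div, norm_pow]
    gcongr
    exact hlower v hv a
  · have hne : γ a - v ≠ 0 := norm_pos_iff.1 ((half_pos hr).trans_le (hlower v hv a))
    simpa [div_eq_mul_inv] using
      (((hasDerivAt_id v).const_sub (γ a)).inv hne).const_mul (u a)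

lemma tendsto_integral_div_sub_atTop (hu : Integrable u μ)
    (hre : ∀ a, (γ a).re ≤ 0) :
    Tendsto (fun m : ℝ ↦ ∫ a, u a / (γ a - m) ∂μ) atTop (𝓝 0) := by
  refine squeeze_zero_norm' (a := fun m : ℝ ↦ (∫ a, ‖u a‖ ∂μ) / m) ?_
    (tendsto_const_nhds.div_atTop tendsto_id)
  filter_upwards [eventually_gt_atTop 0] with m hm
  rw [← integral_div]
  refine norm_integral_le_of_norm_le (hu.norm.div_const m) (ae_of_all _ fun a ↦ ?_)
  have hm_le : m ≤ ‖γ a - m‖ := by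
    rw [← norm_neg, neg_sub]
    refine le_trans ?_ (Complex.re_le_norm _)
    simpa using hre a
  rw [norm_div]
  gcongr

end CauchyIntegral

section Region

/-- The open region to the left of the graph `re z = g (im z)`. -/
def leftRegion (g : ℝ → ℝ) : Set ℂ := {z | z.re < g z.im}

/-- The open region to the right of the graph `re z = g (im z)`. -/
def rightRegion (g : ℝ → ℝ) : Set ℂ := {z | g z.im < z.re}

variable {g : ℝ → ℝ} {z : ℂ}

lemma isOpen_leftRegion (hg : Continuous g) : IsOpen (leftRegion g) :=
  isOpen_lt Complex.continuous_re (by fun_prop)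

lemma add_ofReal_mem_leftRegion (hz : z ∈ leftRegion g) {s : ℝ} (hs : s ≤ 0) :
    z + s ∈ leftRegion g := by
  have : z.re < g z.im := hz
  simpa [leftRegion] using by linarith

lemma notMem_closure_leftRegion (hg : Continuous g) (hz : z ∈ rightRegion g) :
    z ∉ closure (leftRegion g) := by
  have hclosed : IsClosed {z : ℂ | z.re ≤ g z.im} := isClosed_le Complex.continuous_re (by fun_prop)
  have hsub : leftRegion g ⊆ {z | z.re ≤ g z.im} := fun w (hw : w.re < g w.im) ↦ hw.le
  exact fun h ↦ not_le_of_gt (show g z.im < z.re from hz) (closure_minimal hsub hclosed h)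

end Region

/-- An unbounded contour in the closed left half-plane that traverses the graph `re z = g (im z)`
from its lower to its upper end, with derivative `γ'` off a countable set and a nonhorizontal limit
direction at each end. The parameter is normalized by `|t| ≤ ‖γ t‖`. -/
structure IsGraphContour (γ γ' : ℝ → ℂ) (g : ℝ → ℝ) : Prop where
  continuous : Continuous γ
  countable_not_hasDerivAt : {t | ¬HasDerivAt γ (γ' t) t}.Countable
  measurable_deriv : Measurable γ'
  exists_norm_deriv_le : ∃ K, ∀ t, ‖γ' t‖ ≤ K
  continuous_graph : Continuous g
  re_eq (t : ℝ) : (γ t).re = g (γ t).im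
  graph_nonpos (y : ℝ) : g y ≤ 0
  abs_le_norm (t : ℝ) : |t| ≤ ‖γ t‖
  exists_tendsto_atTop : ∃ w : ℂ, 0 < w.im ∧ Tendsto (fun t ↦ γ t / |t|) atTop (𝓝 w)
  exists_tendsto_atBot : ∃ w : ℂ, w.im < 0 ∧ Tendsto (fun t ↦ γ t / |t|) atBot (𝓝 w)

/-- The Cauchy integral of `f` along the contour `γ` with derivative `γ'`. -/
def cauchyTransform (γ γ' : ℝ → ℂ) (f : ℂ → ℂ) (w : ℂ) : ℂ :=
  (((2 * Real.pi : ℝ) : ℂ) * Complex.I)⁻¹ * ∫ t, f (γ t) / (γ t - w) * γ' t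

namespace IsGraphContour

variable {γ γ' : ℝ → ℂ} {g : ℝ → ℝ} {f H : ℂ → ℂ} {l m z : ℂ} {s t : ℝ}

lemma re_nonpos (hγ : IsGraphContour γ γ' g) (t : ℝ) : (γ t).re ≤ 0 :=
  hγ.re_eq t ▸ hγ.graph_nonpos _

lemma re_nonpos_of_mem_leftRegion (hγ : IsGraphContour γ γ' g) (hz : z ∈ leftRegion g) :
    z.re ≤ 0 :=
  (le_of_lt hz).trans (hγ.graph_nonpos _)

lemma ofReal_mem_rightRegion (hγ : IsGraphContour γ γ' g) (hs : 0 < s) :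
    (s : ℂ) ∈ rightRegion g := by
  simpa [rightRegion] using (hγ.graph_nonpos 0).trans_lt hs

lemma add_ofReal_mem_leftRegion (hγ : IsGraphContour γ γ' g) (t : ℝ) (hs : s < 0) :
    γ t + s ∈ leftRegion g := by
  simpa [leftRegion, ← hγ.re_eq t] using hs

lemma add_ofReal_mem_rightRegion (hγ : IsGraphContour γ γ' g) (t : ℝ) (hs : 0 < s) :
    γ t + s ∈ rightRegion g := by
  simpa [rightRegion, ← hγ.re_eq t] using hs

lemma isClosed_range (hγ : IsGraphContour γ γ' g) : IsClosed (range γ) := by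
  refine (isProperMap_iff_tendsto_cocompact.2 ⟨hγ.continuous, ?_⟩).isClosed_range
  refine tendsto_norm_atTop_iff_cobounded.1 ?_ |>.mono_right Metric.cobounded_le_cocompact
  exact tendsto_atTop_mono hγ.abs_le_norm tendsto_norm_cocompact_atTop

lemma ne_of_mem_leftRegion (hγ : IsGraphContour γ γ' g) (hz : z ∈ leftRegion g) (t : ℝ) :
    γ t ≠ z := by
  rintro rfl
  exact (hγ.re_eq t).not_lt hz

lemma ne_of_mem_rightRegion (hγ : IsGraphContour γ γ' g) (hz : z ∈ rightRegion g) (t : ℝ) :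
    γ t ≠ z := by
  rintro rfl
  exact (hγ.re_eq t).not_gt hz

lemma notMem_range_of_mem_leftRegion (hγ : IsGraphContour γ γ' g) (hz : z ∈ leftRegion g) :
    z ∉ range γ :=
  fun ⟨t, ht⟩ ↦ hγ.ne_of_mem_leftRegion hz t ht

lemma notMem_range_of_mem_rightRegion (hγ : IsGraphContour γ γ' g) (hz : z ∈ rightRegion g) :
    z ∉ range γ :=
  fun ⟨t, ht⟩ ↦ hγ.ne_of_mem_rightRegion hz t ht

lemma integrable_mul_deriv (hγ : IsGraphContour γ γ' g) {u : ℝ → ℂ} (hu : Integrable u) :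
    Integrable fun t ↦ u t * γ' t := by
  obtain ⟨K, hK⟩ := hγ.exists_norm_deriv_le
  exact hu.mul_bdd hγ.measurable_deriv.aestronglyMeasurable (ae_of_all _ hK)

lemma norm_comp_le_of_decay (hγ : IsGraphContour γ γ' g) {C : ℝ} (hC : 0 ≤ C) (hs : s ≤ 0)
    (hH : ‖H (γ t + s)‖ ≤ C * ((1 + ‖γ t + s‖) ^ 2)⁻¹) :
    ‖H (γ t + s)‖ ≤ C * ((1 + |t|) ^ 2)⁻¹ := by
  refine hH.trans ?_
  gcongr
  exact (hγ.abs_le_norm t).trans (norm_le_norm_add_ofReal (hγ.re_nonpos t) hs)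

section Cauchy

variable {C : ℝ}

lemma hasDerivAt_leftwardPrimitive (hγ : IsGraphContour γ γ' g)
    (hH : DifferentiableOn ℂ H (leftRegion g)) (hC : 0 ≤ C)
    (hHC : ∀ z ∈ leftRegion g, ‖H z‖ ≤ C * ((1 + ‖z‖) ^ 2)⁻¹) (hz : z ∈ leftRegion g) :
    HasDerivAt (leftwardPrimitive H) (H z) z := by
  have hUs : ∀ z ∈ leftRegion g, ∀ s : ℝ, s ≤ 0 → z + s ∈ leftRegion g := fun z hz s ↦
    _root_.add_ofReal_mem_leftRegion hz
  refine _root_.hasDerivAt_leftwardPrimitive (isOpen_leftRegion hγ.continuous_graph) hUs hH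
    (integrable_inv_one_add_abs_sq.const_mul C).integrableOn (fun w hw s hs ↦ ?_) hz
  refine (hHC _ (hUs w hw s hs)).trans ?_
  gcongr
  exact abs_le_norm_add_ofReal (hγ.re_nonpos_of_mem_leftRegion hw) hs

lemma integrable_comp_add_ofReal (hγ : IsGraphContour γ γ' g)
    (hH : ContinuousOn H (leftRegion g)) (hC : 0 ≤ C)
    (hHC : ∀ z ∈ leftRegion g, ‖H z‖ ≤ C * ((1 + ‖z‖) ^ 2)⁻¹) (hs : s < 0) :
    Integrable fun t ↦ H (γ t + s) := by
  have hmem (t : ℝ) := hγ.add_ofReal_mem_leftRegion t hs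
  have hcont : Continuous fun t ↦ H (γ t + s) :=
    hH.comp_continuous (hγ.continuous.add_const _) hmem
  exact (integrable_inv_one_add_abs_sq.const_mul C).mono' hcont.aestronglyMeasurable
    (ae_of_all _ fun t ↦ hγ.norm_comp_le_of_decay hC hs.le (hHC _ (hmem t)))

lemma integral_comp_add_ofReal_mul_deriv_eq_zero (hγ : IsGraphContour γ γ' g)
    (hH : DifferentiableOn ℂ H (leftRegion g)) (hC : 0 ≤ C)
    (hHC : ∀ z ∈ leftRegion g, ‖H z‖ ≤ C * ((1 + ‖z‖) ^ 2)⁻¹) (hs : s < 0) :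
    ∫ t, H (γ t + s) * γ' t = 0 := by
  have hmem (t : ℝ) := hγ.add_ofReal_mem_leftRegion t hs
  have hprim (t : ℝ) := hγ.hasDerivAt_leftwardPrimitive hH hC hHC (hmem t)
  have hshift : Continuous fun t ↦ γ t + s := hγ.continuous.add_const _
  have hzero {F : Filter ℝ} [F.IsCountablyGenerated] (hF : Tendsto (|·|) F atTop) :
      Tendsto (fun t ↦ leftwardPrimitive H (γ t + s)) F (𝓝 0) := by
    refine tendsto_leftwardPrimitive_zero (fun z hz ↦ hγ.re_nonpos_of_mem_leftRegion hz)
      (fun z hz s ↦ _root_.add_ofReal_mem_leftRegion hz) hH.continuousOn hC hHC hmem ?_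
    exact tendsto_atTop_mono (fun t ↦ (hγ.abs_le_norm t).trans
      (norm_le_norm_add_ofReal (hγ.re_nonpos t) hs.le)) hF
  rw [integral_eq_sub_of_hasDerivAt_off_countable hγ.countable_not_hasDerivAt
    (continuous_iff_continuousAt.2 fun t ↦
      (hprim t).continuousAt.comp (f := fun t ↦ γ t + s) hshift.continuousAt)
    (fun t ht ↦ (hprim t).comp t ((not_not.1 ht).add_const _))
    (hγ.integrable_mul_deriv (hγ.integrable_comp_add_ofReal hH.continuousOn hC hHC hs))
    (hzero tendsto_abs_atBot_atTop) (hzero tendsto_abs_atTop_atTop), sub_zero]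

lemma integral_mul_deriv_eq_zero_of_tendsto (hγ : IsGraphContour γ γ' g)
    (hH : DifferentiableOn ℂ H (leftRegion g)) (hC : 0 ≤ C)
    (hHC : ∀ z ∈ leftRegion g, ‖H z‖ ≤ C * ((1 + ‖z‖) ^ 2)⁻¹) {h : ℝ → ℂ}
    (hlim : ∀ᵐ t, Tendsto (fun s : ℝ ↦ H (γ t + s)) (𝓝[<] 0) (𝓝 (h t))) :
    ∫ t, h t * γ' t = 0 := by
  obtain ⟨K, hK⟩ := hγ.exists_norm_deriv_le
  have hneg : ∀ᶠ s : ℝ in 𝓝[<] 0, s < 0 := self_mem_nhdsWithin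
  have hshift : Tendsto (fun s : ℝ ↦ ∫ t, H (γ t + s) * γ' t) (𝓝[<] 0)
      (𝓝 (∫ t, h t * γ' t)) := by
    refine tendsto_integral_filter_of_dominated_convergence
      (fun t ↦ C * ((1 + |t|) ^ 2)⁻¹ * K) ?_ ?_
      ((integrable_inv_one_add_abs_sq.const_mul C).mul_const K) ?_
    · filter_upwards [hneg] with s hs
      exact (hγ.integrable_mul_deriv (hγ.integrable_comp_add_ofReal hH.continuousOn hC hHC
        hs)).aestronglyMeasurable
    · filter_upwards [hneg] with s hs
      refine ae_of_all _ fun t ↦ ?_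
      rw [norm_mul]
      gcongr
      exacts [hγ.norm_comp_le_of_decay hC hs.le (hHC _ (hγ.add_ofReal_mem_leftRegion t hs)), hK t]
    · filter_upwards [hlim] with t ht using ht.mul_const _
  refine tendsto_nhds_unique hshift (tendsto_const_nhds.congr' ?_)
  filter_upwards [hneg] with s hs
  exact (hγ.integral_comp_add_ofReal_mul_deriv_eq_zero hH hC hHC hs).symm

end Cauchy

section KernelIntegral

lemma integrable_cauchyKernelSub_comp (hγ : IsGraphContour γ γ' g) (hl : l ∉ range γ)
    (hm : m ∉ range γ) : Integrable fun t ↦ cauchyKernelSub l m (γ t) := by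
  rw [← hγ.isClosed_range.closure_eq] at hl hm
  obtain ⟨C, hC, hbound⟩ := exists_norm_cauchyKernelSub_le hl hm
  refine (integrable_inv_one_add_abs_sq.const_mul C).mono'
    (measurable_cauchyKernelSub.comp hγ.continuous.measurable).aestronglyMeasurable
    (ae_of_all _ fun t ↦ (hbound _ (mem_range_self t)).trans ?_)
  gcongr
  exact hγ.abs_le_norm t

lemma sub_mem_slitPlane_of_mem_leftRegion (hγ : IsGraphContour γ γ' g) (hl : l ∈ leftRegion g)
    (t : ℝ) : γ t - l ∈ Complex.slitPlane := by
  by_cases him : (γ t).im = l.im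
  · have hre : l.re < g l.im := hl
    left
    rw [Complex.sub_re, hγ.re_eq, him]
    linarith
  · exact Or.inr (by rwa [Complex.sub_im, sub_ne_zero])

lemma sub_mem_slitPlane_of_mem_rightRegion (hγ : IsGraphContour γ γ' g) (hm : m ∈ rightRegion g)
    (t : ℝ) : m - γ t ∈ Complex.slitPlane := by
  by_cases him : m.im = (γ t).im
  · have hre : g m.im < m.re := hm
    left
    rw [Complex.sub_re, hγ.re_eq, ← him]
    linarith
  · exact Or.inr (by rwa [Complex.sub_im, sub_ne_zero])

lemma hasDerivAt_log_sub_sub_log_sub (hγ : IsGraphContour γ γ' g) (hl : l ∈ leftRegion g)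
    (hm : m ∈ rightRegion g) (ht : HasDerivAt γ (γ' t) t) :
    HasDerivAt (fun t ↦ Complex.log (γ t - l) - Complex.log (m - γ t))
      (cauchyKernelSub l m (γ t) * γ' t) t := by
  refine (((ht.sub_const l).clog_real (hγ.sub_mem_slitPlane_of_mem_leftRegion hl t)).sub
    ((ht.const_sub m).clog_real (hγ.sub_mem_slitPlane_of_mem_rightRegion hm t))).congr_deriv ?_
  rw [cauchyKernelSub, ← neg_sub m (γ t), inv_neg]
  ring

lemma continuous_log_sub_sub_log_sub (hγ : IsGraphContour γ γ' g) (hl : l ∈ leftRegion g)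
    (hm : m ∈ rightRegion g) :
    Continuous fun t ↦ Complex.log (γ t - l) - Complex.log (m - γ t) :=
  ((hγ.continuous.sub continuous_const).clog (hγ.sub_mem_slitPlane_of_mem_leftRegion hl)).sub
    ((continuous_const.sub hγ.continuous).clog (hγ.sub_mem_slitPlane_of_mem_rightRegion hm))

lemma integral_cauchyKernelSub (hγ : IsGraphContour γ γ' g) (hl : l ∈ leftRegion g)
    (hm : m ∈ rightRegion g) :
    ∫ t, cauchyKernelSub l m (γ t) * γ' t = ((2 * Real.pi : ℝ) : ℂ) * Complex.I := by
  obtain ⟨w₁, hw₁, htop⟩ := hγ.exists_tendsto_atTop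
  obtain ⟨w₂, hw₂, hbot⟩ := hγ.exists_tendsto_atBot
  have hint := hγ.integrable_mul_deriv (hγ.integrable_cauchyKernelSub_comp
    (hγ.notMem_range_of_mem_leftRegion hl) (hγ.notMem_range_of_mem_rightRegion hm))
  rw [integral_eq_sub_of_hasDerivAt_off_countable hγ.countable_not_hasDerivAt
    (hγ.continuous_log_sub_sub_log_sub hl hm)
    (fun t ht ↦ hγ.hasDerivAt_log_sub_sub_log_sub hl hm (not_not.1 ht)) hint
    (tendsto_log_sub_sub_log_sub tendsto_abs_atBot_atTop hbot hw₂.ne l m)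
    (tendsto_log_sub_sub_log_sub tendsto_abs_atTop_atTop htop hw₁.ne' l m),
    log_sub_log_neg_of_im_pos hw₁, log_sub_log_neg_of_im_neg hw₂]
  push_cast
  ring

end KernelIntegral

section Jump

lemma integral_sub_mul_cauchyKernelSub_eq_zero (hγ : IsGraphContour γ γ' g)
    (hf : DifferentiableOn ℂ f (leftRegion g)) (hbdd : ∃ M, ∀ z ∈ leftRegion g, ‖f z‖ ≤ M)
    (hlim : ∀ᵐ t, Tendsto (fun s : ℝ ↦ f (γ t + s)) (𝓝[<] 0) (𝓝 (f (γ t))))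
    (hl : l ∈ leftRegion g) (hm : m ∈ rightRegion g) :
    ∫ t, (f (γ t) - f l) * cauchyKernelSub l m (γ t) * γ' t = 0 := by
  have hnhds := (isOpen_leftRegion hγ.continuous_graph).mem_nhds hl
  have hmcl := notMem_closure_leftRegion hγ.continuous_graph hm
  obtain ⟨A, hA0, hA⟩ := exists_norm_dslope_le_inv_one_add_norm hnhds hf hbdd
  obtain ⟨B, hB0, hB⟩ := exists_norm_inv_sub_le hmcl
  -- The difference quotient removes the pole of the kernel at `l`.
  refine hγ.integral_mul_deriv_eq_zero_of_tendsto
    (H := fun z ↦ dslope f l z * ((l - m) * (z - m)⁻¹))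
    (C := ‖l - m‖ * (A * B)) ?_ (by positivity) (fun z hz ↦ ?_) ?_
  · refine ((Complex.differentiableOn_dslope hnhds).2 hf).mul (.const_mul ?_ _)
    exact (differentiableOn_id.sub_const m).inv fun z hz ↦
      sub_ne_zero.2 fun h ↦ hmcl (subset_closure (h ▸ hz))
  · rw [norm_mul, norm_mul]
    calc ‖dslope f l z‖ * (‖l - m‖ * ‖(z - m)⁻¹‖)
        ≤ A * (1 + ‖z‖)⁻¹ * (‖l - m‖ * (B * (1 + ‖z‖)⁻¹)) := by
          gcongr
          exacts [hA z hz, hB z hz]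
      _ = ‖l - m‖ * (A * B) * ((1 + ‖z‖) ^ 2)⁻¹ := by rw [← inv_pow]; ring
  · filter_upwards [hlim] with t ht
    have htl := hγ.ne_of_mem_leftRegion hl t
    have htm := hγ.ne_of_mem_rightRegion hm t
    have hshift := tendsto_add_ofReal_nhdsLT_zero (γ t)
    refine ((ht.sub_const (f l)).mul (tendsto_cauchyKernelSub_add_ofReal htl htm)).congr' ?_
    filter_upwards [hshift.eventually_ne htl, hshift.eventually_ne htm] with s hsl hsm
    exact (dslope_mul_eq_sub_mul_cauchyKernelSub f hsl hsm).symm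

lemma integral_comp_mul_cauchyKernelSub_of_mem_leftRegion (hγ : IsGraphContour γ γ' g)
    (hf : DifferentiableOn ℂ f (leftRegion g)) (hbdd : ∃ M, ∀ z ∈ leftRegion g, ‖f z‖ ≤ M)
    (hlim : ∀ᵐ t, Tendsto (fun s : ℝ ↦ f (γ t + s)) (𝓝[<] 0) (𝓝 (f (γ t))))
    (hint : Integrable fun t ↦ f (γ t) * cauchyKernelSub l m (γ t) * γ' t)
    (hl : l ∈ leftRegion g) (hm : m ∈ rightRegion g) :
    ∫ t, f (γ t) * cauchyKernelSub l m (γ t) * γ' t =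
      ((2 * Real.pi : ℝ) : ℂ) * Complex.I * f l := by
  have hker := hγ.integrable_mul_deriv (hγ.integrable_cauchyKernelSub_comp
    (hγ.notMem_range_of_mem_leftRegion hl) (hγ.notMem_range_of_mem_rightRegion hm))
  have hzero := hγ.integral_sub_mul_cauchyKernelSub_eq_zero hf hbdd hlim hl hm
  simp only [sub_mul, mul_assoc (f l)] at hzero
  rwa [integral_sub hint (hker.const_mul _), integral_const_mul,
    hγ.integral_cauchyKernelSub hl hm, sub_eq_zero, mul_comm (f l)] at hzero

lemma integral_comp_mul_cauchyKernelSub_of_mem_rightRegion (hγ : IsGraphContour γ γ' g)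
    (hf : DifferentiableOn ℂ f (leftRegion g)) (hbdd : ∃ M, ∀ z ∈ leftRegion g, ‖f z‖ ≤ M)
    (hlim : ∀ᵐ t, Tendsto (fun s : ℝ ↦ f (γ t + s)) (𝓝[<] 0) (𝓝 (f (γ t))))
    (hl : l ∈ rightRegion g) (hm : m ∈ rightRegion g) :
    ∫ t, f (γ t) * cauchyKernelSub l m (γ t) * γ' t = 0 := by
  have hlcl := notMem_closure_leftRegion hγ.continuous_graph hl
  have hmcl := notMem_closure_leftRegion hγ.continuous_graph hm
  obtain ⟨M, hM⟩ := hbdd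
  obtain ⟨C, hC0, hC⟩ := exists_norm_cauchyKernelSub_le hlcl hmcl
  refine hγ.integral_mul_deriv_eq_zero_of_tendsto (H := fun z ↦ f z * cauchyKernelSub l m z)
    (C := max M 0 * C) ?_ (by positivity) (fun z hz ↦ ?_) ?_
  · refine hf.mul fun z hz ↦ (differentiableAt_cauchyKernelSub ?_ ?_).differentiableWithinAt
    · exact fun h ↦ hlcl (subset_closure (h ▸ hz))
    · exact fun h ↦ hmcl (subset_closure (h ▸ hz))
  · rw [norm_mul, mul_assoc]
    gcongr
    exacts [(hM z hz).trans (le_max_left _ _), hC z hz]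
  · filter_upwards [hlim] with t ht
    exact ht.mul (tendsto_cauchyKernelSub_add_ofReal (hγ.ne_of_mem_rightRegion hl t)
      (hγ.ne_of_mem_rightRegion hm t))

end Jump

section CauchyTransform

lemma cauchyTransform_eq (γ γ' : ℝ → ℂ) (f : ℂ → ℂ) (w : ℂ) :
    cauchyTransform γ γ' f w = (((2 * Real.pi : ℝ) : ℂ) * Complex.I)⁻¹ *
      ∫ t, f (γ t) * γ' t / (γ t - w) := by
  simp only [cauchyTransform, div_mul_eq_mul_div]

lemma differentiableOn_cauchyTransform (hγ : IsGraphContour γ γ' g)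
    (hint : Integrable fun t ↦ f (γ t)) :
    DifferentiableOn ℂ (cauchyTransform γ γ' f) (range γ)ᶜ := by
  intro w hw
  rw [← hγ.isClosed_range.closure_eq] at hw
  simp only [funext (cauchyTransform_eq γ γ' f)]
  exact ((differentiableAt_integral_div_sub (hγ.integrable_mul_deriv hint)
    hγ.continuous.measurable.aemeasurable hw).const_mul _).differentiableWithinAt

lemma tendsto_cauchyTransform_atTop (hγ : IsGraphContour γ γ' g)
    (hint : Integrable fun t ↦ f (γ t)) :
    Tendsto (fun m : ℝ ↦ cauchyTransform γ γ' f m) atTop (𝓝 0) := by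
  simpa only [cauchyTransform_eq, mul_zero] using
    (tendsto_integral_div_sub_atTop (hγ.integrable_mul_deriv hint) hγ.re_nonpos).const_mul _

lemma integrable_comp_div_sub_mul_deriv (hγ : IsGraphContour γ γ' g)
    (hint : Integrable fun t ↦ f (γ t)) (hl : l ∉ range γ) :
    Integrable fun t ↦ f (γ t) / (γ t - l) * γ' t :=
  hγ.integrable_mul_deriv <| integrable_div_sub hint hγ.continuous.measurable.aemeasurable
    (hγ.isClosed_range.closure_eq.symm ▸ hl)

lemma integrable_comp_mul_cauchyKernelSub (hγ : IsGraphContour γ γ' g)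
    (hint : Integrable fun t ↦ f (γ t)) (hl : l ∉ range γ) (hm : m ∉ range γ) :
    Integrable fun t ↦ f (γ t) * cauchyKernelSub l m (γ t) * γ' t := by
  simpa only [cauchyKernelSub, mul_sub, sub_mul, div_eq_mul_inv, Pi.sub_def] using
    (hγ.integrable_comp_div_sub_mul_deriv hint hl).sub
      (hγ.integrable_comp_div_sub_mul_deriv hint hm)

lemma cauchyTransform_sub_cauchyTransform (hγ : IsGraphContour γ γ' g)
    (hint : Integrable fun t ↦ f (γ t)) (hl : l ∉ range γ) (hm : m ∉ range γ) :
    cauchyTransform γ γ' f l - cauchyTransform γ γ' f m =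
      (((2 * Real.pi : ℝ) : ℂ) * Complex.I)⁻¹ *
        ∫ t, f (γ t) * cauchyKernelSub l m (γ t) * γ' t := by
  rw [cauchyTransform, cauchyTransform, ← mul_sub, ← integral_sub
    (hγ.integrable_comp_div_sub_mul_deriv hint hl) (hγ.integrable_comp_div_sub_mul_deriv hint hm)]
  simp only [cauchyKernelSub, mul_sub, sub_mul, div_eq_mul_inv]

lemma cauchyTransform_eq_of_forall_sub_eq (hγ : IsGraphContour γ γ' g)
    (hint : Integrable fun t ↦ f (γ t)) {c : ℂ}
    (h : ∀ m ∈ rightRegion g, cauchyTransform γ γ' f l - cauchyTransform γ γ' f m = c) :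
    cauchyTransform γ γ' f l = c := by
  have hlim : Tendsto (fun m : ℝ ↦ cauchyTransform γ γ' f l - cauchyTransform γ γ' f m) atTop
      (𝓝 (cauchyTransform γ γ' f l)) := by
    simpa only [sub_zero] using (hγ.tendsto_cauchyTransform_atTop hint).const_sub _
  refine tendsto_nhds_unique hlim (tendsto_const_nhds.congr' ?_)
  filter_upwards [eventually_gt_atTop 0] with m hm
  exact (h m (hγ.ofReal_mem_rightRegion hm)).symm

lemma cauchyTransform_of_mem_leftRegion (hγ : IsGraphContour γ γ' g)
    (hf : DifferentiableOn ℂ f (leftRegion g)) (hbdd : ∃ M, ∀ z ∈ leftRegion g, ‖f z‖ ≤ M)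
    (hlim : ∀ᵐ t, Tendsto (fun s : ℝ ↦ f (γ t + s)) (𝓝[<] 0) (𝓝 (f (γ t))))
    (hint : Integrable fun t ↦ f (γ t)) (hl : l ∈ leftRegion g) :
    cauchyTransform γ γ' f l = f l := by
  have hl' := hγ.notMem_range_of_mem_leftRegion hl
  refine hγ.cauchyTransform_eq_of_forall_sub_eq hint fun m hm ↦ ?_
  have hm' := hγ.notMem_range_of_mem_rightRegion hm
  rw [hγ.cauchyTransform_sub_cauchyTransform hint hl' hm',
    hγ.integral_comp_mul_cauchyKernelSub_of_mem_leftRegion hf hbdd hlim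
      (hγ.integrable_comp_mul_cauchyKernelSub hint hl' hm') hl hm,
    inv_mul_cancel_left₀ (by simp [Real.pi_ne_zero])]

lemma cauchyTransform_of_mem_rightRegion (hγ : IsGraphContour γ γ' g)
    (hf : DifferentiableOn ℂ f (leftRegion g)) (hbdd : ∃ M, ∀ z ∈ leftRegion g, ‖f z‖ ≤ M)
    (hlim : ∀ᵐ t, Tendsto (fun s : ℝ ↦ f (γ t + s)) (𝓝[<] 0) (𝓝 (f (γ t))))
    (hint : Integrable fun t ↦ f (γ t)) (hl : l ∈ rightRegion g) :
    cauchyTransform γ γ' f l = 0 := by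
  refine hγ.cauchyTransform_eq_of_forall_sub_eq hint fun m hm ↦ ?_
  rw [hγ.cauchyTransform_sub_cauchyTransform hint (hγ.notMem_range_of_mem_rightRegion hl)
    (hγ.notMem_range_of_mem_rightRegion hm),
    hγ.integral_comp_mul_cauchyKernelSub_of_mem_rightRegion hf hbdd hlim hl hm, mul_zero]

end CauchyTransform

end IsGraphContour

theorem stmt9_general {γ γ' : ℝ → ℂ} {g : ℝ → ℝ} {f : ℂ → ℂ} (hγ : IsGraphContour γ γ' g)
    (hf : DifferentiableOn ℂ f (leftRegion g)) (hbdd : ∃ M, ∀ z ∈ leftRegion g, ‖f z‖ ≤ M)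
    (hlim : ∀ᵐ t, Tendsto (fun s : ℝ ↦ f (γ t + s)) (𝓝[<] 0) (𝓝 (f (γ t))))
    (hint : Integrable fun t ↦ f (γ t)) :
    DifferentiableOn ℂ (cauchyTransform γ γ' f) (range γ)ᶜ ∧
    (∀ w ∈ leftRegion g, cauchyTransform γ γ' f w = f w) ∧
    (∀ w ∈ rightRegion g, cauchyTransform γ γ' f w = 0) :=
  ⟨hγ.differentiableOn_cauchyTransform hint,
    fun _ ↦ hγ.cauchyTransform_of_mem_leftRegion hf hbdd hlim hint,
    fun _ ↦ hγ.cauchyTransform_of_mem_rightRegion hf hbdd hlim hint⟩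

section GammaCurve

/-- The function `y ↦ x` whose graph `x = gammaGraph θ ε y` is the contour `Γ_{θ,ε}`. The square
root is `0` for `|y| ≥ ε`, where only the rays matter. -/
def gammaGraph (θ ε y : ℝ) : ℝ := min (Real.cot θ * |y|) (-√(ε ^ 2 - y ^ 2))

variable {θ ε t : ℝ}

lemma gammaGraph_nonpos (θ ε y : ℝ) : gammaGraph θ ε y ≤ 0 :=
  (min_le_right _ _).trans (neg_nonpos.2 (Real.sqrt_nonneg _))

lemma continuous_gammaGraph (θ ε : ℝ) : Continuous (gammaGraph θ ε) := by
  unfold gammaGraph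
  fun_prop

lemma sin_pos_of_obtuse (hθ₁ : Real.pi / 2 < θ) (hθ₂ : θ < Real.pi) : 0 < Real.sin θ :=
  Real.sin_pos_of_pos_of_lt_pi (by linarith [Real.pi_pos]) hθ₂

lemma cos_neg_of_obtuse (hθ₁ : Real.pi / 2 < θ) (hθ₂ : θ < Real.pi) : Real.cos θ < 0 :=
  Real.cos_neg_of_pi_div_two_lt_of_lt hθ₁ (by linarith)

lemma cot_neg_of_obtuse (hθ₁ : Real.pi / 2 < θ) (hθ₂ : θ < Real.pi) : Real.cot θ < 0 := by
  rw [Real.cot_eq_cos_div_sin]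
  exact div_neg_of_neg_of_pos (cos_neg_of_obtuse hθ₁ hθ₂) (sin_pos_of_obtuse hθ₁ hθ₂)

lemma gammaGraph_ray (hθ₁ : Real.pi / 2 < θ) (hθ₂ : θ < Real.pi) (hε : 0 ≤ ε) {r y : ℝ}
    (hr : ε ≤ r) (hy : |y| = r * Real.sin θ) : gammaGraph θ ε y = r * Real.cos θ := by
  have hs := sin_pos_of_obtuse hθ₁ hθ₂
  have hc := cos_neg_of_obtuse hθ₁ hθ₂
  have hcot : Real.cot θ * |y| = r * Real.cos θ := by
    rw [hy, Real.cot_eq_cos_div_sin]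
    field_simp
  have hpyth : y ^ 2 + (r * Real.cos θ) ^ 2 = r ^ 2 := by
    rw [← sq_abs y, hy, mul_pow, mul_pow, ← mul_add, Real.sin_sq_add_cos_sq, mul_one]
  rw [gammaGraph, hcot, min_eq_left]
  rw [le_neg, Real.sqrt_le_iff]
  exact ⟨by nlinarith, by nlinarith⟩

lemma gammaGraph_arc (hθ₁ : Real.pi / 2 < θ) (hθ₂ : θ < Real.pi) (hε : 0 ≤ ε) {x : ℝ}
    (hx : |x| ≤ Real.pi - θ) : gammaGraph θ ε (ε * Real.sin x) = -(ε * Real.cos x) := by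
  have hs := sin_pos_of_obtuse hθ₁ hθ₂
  have hcos : 0 ≤ Real.cos x :=
    Real.cos_nonneg_of_mem_Icc (abs_le.1 (hx.trans (by linarith)))
  have hsqrt : √(ε ^ 2 - (ε * Real.sin x) ^ 2) = ε * Real.cos x := by
    rw [← Real.sqrt_sq (mul_nonneg hε hcos), mul_pow, mul_pow, Real.cos_sq']
    ring_nf
  have hsin : |Real.sin x| = Real.sin |x| := by
    rw [Real.abs_sin_eq_sin_abs_of_abs_le_pi (hx.trans (by linarith [Real.pi_pos]))]
  have hadd : 0 ≤ Real.sin θ * Real.cos x + Real.cos θ * |Real.sin x| := by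
    rw [hsin, ← Real.cos_abs x, ← Real.sin_add]
    exact Real.sin_nonneg_of_nonneg_of_le_pi
      (by linarith [abs_nonneg x, Real.pi_pos]) (by linarith)
  rw [gammaGraph, hsqrt, min_eq_right]
  rw [abs_mul, abs_of_nonneg hε, Real.cot_eq_cos_div_sin, div_mul_eq_mul_div, le_div_iff₀ hs]
  nlinarith

lemma gammaCurve_of_le_neg (ht : t ≤ -ε) :
    gammaCurve θ ε t = ((-t : ℝ) : ℂ) * Complex.exp (-(θ : ℂ) * Complex.I) := by
  rw [gammaCurve, if_pos ht, Complex.ofReal_neg]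

lemma gammaCurve_of_le (hε : 0 ≤ ε) (ht : ε ≤ t) :
    gammaCurve θ ε t = (t : ℂ) * Complex.exp ((θ : ℂ) * Complex.I) := by
  by_cases h : t ≤ -ε
  · rw [gammaCurve_of_le_neg h, show t = 0 by linarith]
    simp
  · rw [gammaCurve, if_neg h, if_neg ht.not_gt]

lemma neg_exp_pi_sub_mul_I (x : ℝ) :
    -Complex.exp (((Real.pi - x : ℝ) : ℂ) * Complex.I) = Complex.exp (-(x : ℂ) * Complex.I) := by
  rw [← Complex.exp_sub_pi_mul_I]
  push_cast
  ring_nf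

lemma exp_I_mul_neg_sub_pi (x : ℝ) : Complex.exp (Complex.I * ((-x - Real.pi : ℝ) : ℂ)) =
    -Complex.exp (((-x : ℝ) : ℂ) * Complex.I) := by
  rw [← Complex.exp_sub_pi_mul_I]
  push_cast
  ring_nf

lemma gammaCurve_of_mem_Icc (ht : t ∈ Icc (-ε) ε) :
    gammaCurve θ ε t =
      -(ε : ℂ) * Complex.exp (((-(t * (Real.pi - θ) / ε) : ℝ) : ℂ) * Complex.I) := by
  rcases (neg_le_self_iff.1 (ht.1.trans ht.2)).eq_or_lt with rfl | hε
  · rw [gammaCurve_of_le_neg (by linarith [ht.2]), show t = 0 by linarith [ht.1, ht.2]]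
    simp
  rcases ht.1.eq_or_lt with rfl | hgt
  · have harg : -(-ε * (Real.pi - θ) / ε) = Real.pi - θ := by field_simp
    rw [gammaCurve_of_le_neg le_rfl, ← neg_exp_pi_sub_mul_I, harg, neg_neg, mul_neg, neg_mul]
  rcases ht.2.eq_or_lt with rfl | hlt
  · have harg : -(t * (Real.pi - θ) / t) = Real.pi - (2 * Real.pi - θ) := by field_simp; ring
    rw [gammaCurve_of_le hε.le le_rfl, harg, neg_mul_comm, neg_exp_pi_sub_mul_I,
      ← Complex.exp_periodic.sub_eq]
    push_cast
    ring_nf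
  · rw [gammaCurve, if_neg hgt.not_ge, if_pos hlt, exp_I_mul_neg_sub_pi, mul_neg, neg_mul]

lemma continuous_gammaCurve (hε : 0 ≤ ε) : Continuous (gammaCurve θ ε) := by
  have hleft : ContinuousOn (gammaCurve θ ε) (Iic (-ε)) :=
    ContinuousOn.congr (by fun_prop) fun t ht ↦ gammaCurve_of_le_neg ht
  have harc : ContinuousOn (gammaCurve θ ε) (Icc (-ε) ε) :=
    ContinuousOn.congr (by fun_prop) fun t ht ↦ gammaCurve_of_mem_Icc ht
  have hright : ContinuousOn (gammaCurve θ ε) (Ici ε) :=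
    ContinuousOn.congr (by fun_prop) fun t ht ↦ gammaCurve_of_le hε ht
  have h := (hleft.union_of_isClosed harc isClosed_Iic isClosed_Icc).union_of_isClosed hright
    (isClosed_Iic.union isClosed_Icc) isClosed_Ici
  rwa [Iic_union_Icc_eq_Iic (by linarith), Iic_union_Ici, continuousOn_univ] at h

lemma hasDerivAt_gammaCurve (hε : 0 ≤ ε) (ht₁ : t ≠ -ε) (ht₂ : t ≠ ε) :
    HasDerivAt (gammaCurve θ ε) (gammaDeriv θ ε t) t := by
  have hid : HasDerivAt (fun t : ℝ ↦ (t : ℂ)) 1 t := Complex.ofRealCLM.hasDerivAt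
  rcases lt_or_gt_of_ne ht₁ with hlt | hgt
  · rw [gammaDeriv, if_pos hlt.le]
    have h := (hid.neg.mul_const (Complex.exp (-(θ : ℂ) * Complex.I)))
    refine (h.congr_of_eventuallyEq ?_).congr_deriv (neg_one_mul _)
    filter_upwards [Iio_mem_nhds hlt] with u hu
    simpa using gammaCurve_of_le_neg (le_of_lt hu)
  rcases lt_or_gt_of_ne ht₂ with hlt' | hgt'
  · rw [gammaDeriv, if_neg hgt.not_ge, if_pos hlt', exp_I_mul_neg_sub_pi]
    have hε' : (ε : ℂ) ≠ 0 := Complex.ofReal_ne_zero.2 (by linarith)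
    have h := ((((hid.mul_const ((Real.pi - θ : ℝ) : ℂ)).div_const (ε : ℂ)).neg.mul_const
      Complex.I).cexp).const_mul (-(ε : ℂ))
    refine (h.congr_of_eventuallyEq ?_).congr_deriv ?_
    · filter_upwards [Ioo_mem_nhds hgt hlt'] with u hu
      simpa using gammaCurve_of_mem_Icc (Ioo_subset_Icc_self hu)
    · simp only [Pi.neg_apply]
      push_cast
      field_simp
  · rw [gammaDeriv, if_neg hgt.not_ge, if_neg (not_lt.2 hgt'.le)]
    refine ((hid.mul_const _).congr_of_eventuallyEq ?_).congr_deriv (one_mul _)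
    filter_upwards [Ioi_mem_nhds hgt'] with u hu
    exact gammaCurve_of_le hε (le_of_lt hu)

lemma measurable_gammaDeriv (θ ε : ℝ) : Measurable (gammaDeriv θ ε) := by
  unfold gammaDeriv
  refine Measurable.ite measurableSet_Iic measurable_const
    (Measurable.ite measurableSet_Iio (Continuous.measurable ?_) measurable_const)
  fun_prop

lemma norm_exp_neg_ofReal_mul_I (x : ℝ) : ‖Complex.exp (-(x : ℂ) * Complex.I)‖ = 1 := by
  simpa using Complex.norm_exp_ofReal_mul_I (-x)

lemma norm_gammaDeriv_le (θ ε t : ℝ) : ‖gammaDeriv θ ε t‖ ≤ max 1 |Real.pi - θ| := by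
  unfold gammaDeriv
  split_ifs
  · rw [norm_neg, norm_exp_neg_ofReal_mul_I]
    exact le_max_left _ _
  · rw [norm_mul, norm_mul, norm_neg, Complex.norm_I, one_mul, Complex.norm_real,
      Real.norm_eq_abs, exp_I_mul_neg_sub_pi, norm_neg, Complex.norm_exp_ofReal_mul_I, mul_one]
    exact le_max_right _ _
  · rw [Complex.norm_exp_ofReal_mul_I]
    exact le_max_left _ _

lemma abs_le_norm_gammaCurve (hε : 0 ≤ ε) (t : ℝ) : |t| ≤ ‖gammaCurve θ ε t‖ := by
  rcases le_total t (-ε) with h | h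
  · rw [gammaCurve_of_le_neg h, norm_mul, norm_exp_neg_ofReal_mul_I, mul_one, Complex.norm_real,
      norm_neg, Real.norm_eq_abs]
  rcases le_total t ε with h' | h'
  · rw [gammaCurve_of_mem_Icc ⟨h, h'⟩, norm_mul, Complex.norm_exp_ofReal_mul_I, mul_one, norm_neg,
      Complex.norm_of_nonneg hε]
    exact abs_le.2 ⟨h, h'⟩
  · rw [gammaCurve_of_le hε h', norm_mul, Complex.norm_exp_ofReal_mul_I, mul_one,
      Complex.norm_real, Real.norm_eq_abs]

lemma re_gammaCurve (hθ₁ : Real.pi / 2 < θ) (hθ₂ : θ < Real.pi) (hε : 0 ≤ ε) (t : ℝ) :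
    (gammaCurve θ ε t).re = gammaGraph θ ε (gammaCurve θ ε t).im := by
  have hs := sin_pos_of_obtuse hθ₁ hθ₂
  rcases le_total t (-ε) with h | h
  · rw [gammaCurve_of_le_neg h, ← Complex.ofReal_neg, Complex.re_ofReal_mul, Complex.im_ofReal_mul,
      Complex.exp_ofReal_mul_I_re, Complex.exp_ofReal_mul_I_im, Real.cos_neg, Real.sin_neg]
    refine (gammaGraph_ray hθ₁ hθ₂ hε (by linarith) ?_).symm
    rw [mul_neg, abs_neg, abs_of_nonneg (mul_nonneg (by linarith) hs.le)]
  rcases le_total t ε with h' | h'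
  · have hx : |t * (Real.pi - θ) / ε| ≤ Real.pi - θ := by
      rw [abs_div, abs_mul, abs_of_pos (sub_pos.2 hθ₂), abs_of_nonneg hε]
      refine div_le_of_le_mul₀ hε (by linarith) ?_
      rw [mul_comm]
      exact mul_le_mul_of_nonneg_left (abs_le.2 ⟨h, h'⟩) (by linarith)
    rw [gammaCurve_of_mem_Icc ⟨h, h'⟩, ← Complex.ofReal_neg, Complex.re_ofReal_mul,
      Complex.im_ofReal_mul, Complex.exp_ofReal_mul_I_re, Complex.exp_ofReal_mul_I_im,
      Real.cos_neg, Real.sin_neg, neg_mul_neg, gammaGraph_arc hθ₁ hθ₂ hε hx, neg_mul]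
  · rw [gammaCurve_of_le hε h', Complex.re_ofReal_mul, Complex.im_ofReal_mul,
      Complex.exp_ofReal_mul_I_re, Complex.exp_ofReal_mul_I_im]
    refine (gammaGraph_ray hθ₁ hθ₂ hε h' ?_).symm
    rw [abs_of_nonneg (mul_nonneg (hε.trans h') hs.le)]

lemma re_gammaCurve_neg (hθ₁ : Real.pi / 2 < θ) (hθ₂ : θ < Real.pi) (hε : 0 ≤ ε) (ht : t ≠ 0) :
    (gammaCurve θ ε t).re < 0 := by
  have hre := re_gammaCurve hθ₁ hθ₂ hε t
  by_cases him : (gammaCurve θ ε t).im = 0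
  · refine lt_of_le_of_ne (hre ▸ gammaGraph_nonpos _ _ _) fun h ↦ ?_
    have hzero : gammaCurve θ ε t = 0 := Complex.ext h him
    have hnorm := abs_le_norm_gammaCurve (θ := θ) hε t
    rw [hzero, norm_zero] at hnorm
    exact ht (abs_nonpos_iff.1 hnorm)
  · rw [hre]
    exact (min_le_left _ _).trans_lt
      (mul_neg_of_neg_of_pos (cot_neg_of_obtuse hθ₁ hθ₂) (abs_pos.2 him))

lemma tendsto_gammaCurve_div_abs_atTop (hε : 0 ≤ ε) :
    Tendsto (fun t ↦ gammaCurve θ ε t / |t|) atTop (𝓝 (Complex.exp (θ * Complex.I))) := by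
  refine tendsto_const_nhds.congr' ?_
  filter_upwards [eventually_ge_atTop ε, eventually_gt_atTop 0] with t ht ht₀
  rw [gammaCurve_of_le hε ht, abs_of_pos ht₀,
    mul_div_cancel_left₀ _ (Complex.ofReal_ne_zero.2 ht₀.ne')]

lemma tendsto_gammaCurve_div_abs_atBot (θ ε : ℝ) :
    Tendsto (fun t ↦ gammaCurve θ ε t / |t|) atBot (𝓝 (Complex.exp (-θ * Complex.I))) := by
  refine tendsto_const_nhds.congr' ?_
  filter_upwards [eventually_le_atBot (-ε), eventually_lt_atBot 0] with t ht ht₀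
  rw [gammaCurve_of_le_neg ht, abs_of_neg ht₀,
    mul_div_cancel_left₀ _ (Complex.ofReal_ne_zero.2 (neg_ne_zero.2 ht₀.ne))]

lemma isGraphContour_gammaCurve (hθ₁ : Real.pi / 2 < θ) (hθ₂ : θ < Real.pi) (hε : 0 ≤ ε) :
    IsGraphContour (gammaCurve θ ε) (gammaDeriv θ ε) (gammaGraph θ ε) where
  continuous := continuous_gammaCurve hε
  countable_not_hasDerivAt := by
    refine (Set.toFinite {-ε, ε}).countable.mono fun t ht ↦ ?_
    by_contra hne
    rw [mem_insert_iff, mem_singleton_iff, not_or] at hne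
    exact ht (hasDerivAt_gammaCurve hε hne.1 hne.2)
  measurable_deriv := measurable_gammaDeriv θ ε
  exists_norm_deriv_le := ⟨_, norm_gammaDeriv_le θ ε⟩
  continuous_graph := continuous_gammaGraph θ ε
  re_eq := re_gammaCurve hθ₁ hθ₂ hε
  graph_nonpos := gammaGraph_nonpos θ ε
  abs_le_norm := abs_le_norm_gammaCurve hε
  exists_tendsto_atTop := by
    refine ⟨_, ?_, tendsto_gammaCurve_div_abs_atTop hε⟩
    rw [Complex.exp_ofReal_mul_I_im]
    exact sin_pos_of_obtuse hθ₁ hθ₂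
  exists_tendsto_atBot := by
    refine ⟨_, ?_, tendsto_gammaCurve_div_abs_atBot θ ε⟩
    rw [← Complex.ofReal_neg, Complex.exp_ofReal_mul_I_im, Real.sin_neg]
    exact neg_lt_zero.2 (sin_pos_of_obtuse hθ₁ hθ₂)

lemma leftRegion_gammaGraph_subset (θ ε : ℝ) : leftRegion (gammaGraph θ ε) ⊆ {z | z.re < 0} :=
  fun z hz ↦ lt_of_lt_of_le hz (gammaGraph_nonpos θ ε z.im)

lemma gammaMinus_subset_leftRegion (hθ₁ : Real.pi / 2 < θ) (hθ₂ : θ < Real.pi) (hε : 0 ≤ ε) :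
    gammaMinus θ ε ⊆ leftRegion (gammaGraph θ ε) := by
  rintro _ ⟨t, x, hx, rfl⟩
  exact (isGraphContour_gammaCurve hθ₁ hθ₂ hε).add_ofReal_mem_leftRegion t hx

lemma gammaPlus_subset_rightRegion (hθ₁ : Real.pi / 2 < θ) (hθ₂ : θ < Real.pi) (hε : 0 ≤ ε) :
    gammaPlus θ ε ⊆ rightRegion (gammaGraph θ ε) := by
  rintro _ ⟨t, x, hx, rfl⟩
  exact (isGraphContour_gammaCurve hθ₁ hθ₂ hε).add_ofReal_mem_rightRegion t hx

end GammaCurve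

namespace MemHaInf

variable {f : ℂ → ℂ} {θ ε : ℝ}

lemma aestronglyMeasurable_comp_gammaCurve (hf : MemHaInf f) (hθ₁ : Real.pi / 2 < θ)
    (hθ₂ : θ < Real.pi) (hε : 0 ≤ ε) :
    AEStronglyMeasurable fun t ↦ f (gammaCurve θ ε t) := by
  have hcont : ContinuousOn (fun t ↦ f (gammaCurve θ ε t)) {0}ᶜ :=
    hf.holo.continuousOn.comp (continuous_gammaCurve hε).continuousOn fun t ht ↦
      re_gammaCurve_neg hθ₁ hθ₂ hε ht
  have hmeas := hcont.aestronglyMeasurable (μ := volume) (measurableSet_singleton 0).compl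
  rwa [restrict_compl_singleton] at hmeas

lemma integrableOn_comp_gammaCurve_Iic (hf : MemHaInf f) (hθ₁ : Real.pi / 2 < θ)
    (hθ₂ : θ < Real.pi) (hε : 0 ≤ ε) :
    IntegrableOn (fun t ↦ f (gammaCurve θ ε t)) (Iic (-ε)) := by
  have hray : IntegrableOn (fun r : ℝ ↦ ‖f (r * Complex.exp (-θ * Complex.I))‖) (Ioi (-0)) := by
    simpa using hf.lineIntMinus 0 le_rfl θ hθ₁ hθ₂
  have hray' := ((integrableOn_Iic_iff_integrableOn_Iio (by simp)).2 hray.comp_neg_Iio).mono_set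
    (Iic_subset_Iic.2 (neg_nonpos.2 hε))
  refine hray'.mono' (hf.aestronglyMeasurable_comp_gammaCurve hθ₁ hθ₂ hε).restrict
    (ae_restrict_of_forall_mem measurableSet_Iic fun t ht ↦ le_of_eq ?_)
  rw [gammaCurve_of_le_neg ht]

lemma integrableOn_comp_gammaCurve_Icc (hf : MemHaInf f) (hθ₁ : Real.pi / 2 < θ)
    (hθ₂ : θ < Real.pi) (hε : 0 ≤ ε) :
    IntegrableOn (fun t ↦ f (gammaCurve θ ε t)) (Icc (-ε) ε) := by
  obtain ⟨M, hM⟩ := hf.bdd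
  refine Measure.integrableOn_of_bounded (M := M) measure_Icc_lt_top.ne
    (hf.aestronglyMeasurable_comp_gammaCurve hθ₁ hθ₂ hε) (ae_restrict_of_ae ?_)
  filter_upwards [Measure.ae_ne volume 0] with t ht
  exact hM _ (re_gammaCurve_neg hθ₁ hθ₂ hε ht)

lemma integrableOn_comp_gammaCurve_Ici (hf : MemHaInf f) (hθ₁ : Real.pi / 2 < θ)
    (hθ₂ : θ < Real.pi) (hε : 0 ≤ ε) :
    IntegrableOn (fun t ↦ f (gammaCurve θ ε t)) (Ici ε) := by
  have hray := ((integrableOn_Ici_iff_integrableOn_Ioi (by simp)).2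
    (hf.lineIntPlus 0 le_rfl θ hθ₁ hθ₂)).mono_set (Ici_subset_Ici.2 hε)
  refine hray.mono' (hf.aestronglyMeasurable_comp_gammaCurve hθ₁ hθ₂ hε).restrict
    (ae_restrict_of_forall_mem measurableSet_Ici fun t ht ↦ le_of_eq ?_)
  rw [gammaCurve_of_le hε ht, Complex.ofReal_zero, zero_add]

lemma integrable_comp_gammaCurve (hf : MemHaInf f) (hθ₁ : Real.pi / 2 < θ)
    (hθ₂ : θ < Real.pi) (hε : 0 ≤ ε) : Integrable fun t ↦ f (gammaCurve θ ε t) := by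
  have h := ((hf.integrableOn_comp_gammaCurve_Iic hθ₁ hθ₂ hε).union
    (hf.integrableOn_comp_gammaCurve_Icc hθ₁ hθ₂ hε)).union
    (hf.integrableOn_comp_gammaCurve_Ici hθ₁ hθ₂ hε)
  rwa [Iic_union_Icc_eq_Iic (by linarith), Iic_union_Ici, integrableOn_univ] at h

lemma ae_tendsto_comp_gammaCurve_add_ofReal (hf : MemHaInf f) (hθ₁ : Real.pi / 2 < θ)
    (hθ₂ : θ < Real.pi) (hε : 0 ≤ ε) :
    ∀ᵐ t, Tendsto (fun s : ℝ ↦ f (gammaCurve θ ε t + s)) (𝓝[<] 0) (𝓝 (f (gammaCurve θ ε t))) := by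
  filter_upwards [Measure.ae_ne volume 0] with t ht
  have hnhds := (isOpen_lt Complex.continuous_re continuous_const).mem_nhds
    (re_gammaCurve_neg hθ₁ hθ₂ hε ht)
  exact (hf.holo.differentiableAt hnhds).continuousAt.tendsto.comp
    (tendsto_add_ofReal_nhdsLT_zero _)

end MemHaInf

/-- for `f ∈ H_a^∞`,
`f̃(λ) = (2πi)⁻¹ ∫_{Γ_{θ,ε}} f(z)/(z−λ) dz` is holomorphic off the contour,
equals `f` on the left region `Γ_{θ,ε}^−` and vanishes on the right region `Γ_{θ,ε}^+`. -/
theorem stmt9 (f : ℂ → ℂ) (hf : MemHaInf f) (θ ε : ℝ)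
    (hθ1 : Real.pi / 2 < θ) (hθ2 : θ < Real.pi) (hε : 0 ≤ ε) :
    DifferentiableOn ℂ
      (fun lam : ℂ => (((2 * Real.pi : ℝ) : ℂ) * Complex.I)⁻¹ *
        ∫ t : ℝ, f (gammaCurve θ ε t) / (gammaCurve θ ε t - lam) * gammaDeriv θ ε t)
      (Set.range (gammaCurve θ ε))ᶜ ∧
    (∀ lam ∈ gammaMinus θ ε,
      (((2 * Real.pi : ℝ) : ℂ) * Complex.I)⁻¹ *
        (∫ t : ℝ, f (gammaCurve θ ε t) / (gammaCurve θ ε t - lam) * gammaDeriv θ ε t)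
      = f lam) ∧
    (∀ lam ∈ gammaPlus θ ε,
      (((2 * Real.pi : ℝ) : ℂ) * Complex.I)⁻¹ *
        (∫ t : ℝ, f (gammaCurve θ ε t) / (gammaCurve θ ε t - lam) * gammaDeriv θ ε t)
      = 0) := by
  obtain ⟨hdiff, hleft, hright⟩ := stmt9_general (isGraphContour_gammaCurve hθ1 hθ2 hε)
    (hf.holo.mono (leftRegion_gammaGraph_subset θ ε))
    (hf.bdd.imp fun M hM z hz ↦ hM z (leftRegion_gammaGraph_subset θ ε hz))
    (hf.ae_tendsto_comp_gammaCurve_add_ofReal hθ1 hθ2 hε)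
    (hf.integrable_comp_gammaCurve hθ1 hθ2 hε)
  exact ⟨hdiff, fun w hw ↦ hleft w (gammaMinus_subset_leftRegion hθ1 hθ2 hε hw),
    fun w hw ↦ hright w (gammaPlus_subset_rightRegion hθ1 hθ2 hε hw)⟩
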